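/- arXiv:1112.5157 — 3 statements merged into one kernel-verified Lean document; each statement's English description precedes it below -/
import Mathlib

section
/- Let G be a connected d-regular graph and let v be a vertex with deg₂(v) ≤ 3 and N₂'(v) = ∅. Then G has at most d + 4 vertices; moreover, if d > 6, then G² is a complete graph. -/
open SimpleGraph

variable {V : Type*}

/-- The set of vertices at distance exactly `i` from `v`. -/
def distSet (G : SimpleGraph V) (v : V) (i : ℕ) : Set V := {u | G.dist v u = i}

/-- `deg₂ v` : the number of vertices at distance exactly 2 from `v`. -/
noncomputable def deg2 (G : SimpleGraph V) (v : V) : ℕ := (distSet G v 2).ncard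

/-- `N₂'(v)` : vertices at distance 2 from `v` that are adjacent to a vertex at
distance 3 from `v`. -/
def N2' (G : SimpleGraph V) (v : V) : Set V :=
  {u | G.dist v u = 2 ∧ ∃ w, G.dist v w = 3 ∧ G.Adj u w}

/-- The square of `G` : an edge between `u` and `v` whenever `1 ≤ d(u,v) ≤ 2`. -/
def graphSquare (G : SimpleGraph V) : SimpleGraph V where
  Adj u v := 1 ≤ G.dist u v ∧ G.dist u v ≤ 2
  symm := by
    refine ⟨?_⟩
    intro u v h
    rwa [SimpleGraph.dist_comm]
  loopless := by
    refine ⟨?_⟩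
    intro v h
    simp [SimpleGraph.dist_self] at h

/-- `G` is `d`-regular : every vertex has exactly `d` neighbors. -/
def IsRegularGraph (G : SimpleGraph V) (d : ℕ) : Prop :=
  ∀ v, (G.neighborSet v).ncard = d

/-- The vertex set of the connected component of `G - u` containing `v` :
all vertices reachable from `v` by a walk avoiding `u`. -/
def compDel (G : SimpleGraph V) (u v : V) : Set V :=
  {w | ∃ p : G.Walk v w, u ∉ p.support}

theorem stmt2_dist_step {V : Type*} (G : SimpleGraph V) (hconn : G.Connected) (v : V)
    (hN : N2' G v = ∅) {a b : V} (h : G.Adj a b) (ha : G.dist v a ≤ 2) : G.dist v b ≤ 2 := by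
  by_contra hb
  have h1 : G.dist a b = 1 := SimpleGraph.dist_eq_one_iff_adj.mpr h
  have h2 := hconn.dist_triangle (u := v) (v := a) (w := b)
  have : a ∈ N2' G v := ⟨by omega, b, by omega, h⟩
  simp [hN] at this

theorem stmt2_dist_le {V : Type*} (G : SimpleGraph V) (hconn : G.Connected) (v : V)
    (hN : N2' G v = ∅) {a b : V} (p : G.Walk a b) (ha : G.dist v a ≤ 2) : G.dist v b ≤ 2 := by
  induction p with
  | nil => exact ha
  | cons h p ih => exact ih (stmt2_dist_step G hconn v hN h ha)

/-- If `G` is connected and `d`-regular, and `v` satisfies `deg₂(v) ≤ 3`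
and `N₂'(v) = ∅`, then `G` has at most `d + 4` vertices; moreover if `d > 6` then `G²`
is complete. -/
theorem stmt2 {V : Type*} [Fintype V] (G : SimpleGraph V) (d : ℕ)
    (hconn : G.Connected) (hreg : IsRegularGraph G d)
    (v : V) (hv : deg2 G v ≤ 3) (hN : N2' G v = ∅) :
    Fintype.card V ≤ d + 4 ∧ (6 < d → graphSquare G = ⊤) := by
  have hall : ∀ w, G.dist v w ≤ 2 := fun w => by
    obtain ⟨p⟩ := hconn.preconnected v w
    exact stmt2_dist_le G hconn v hN p (by simp)
  have hcard : Fintype.card V ≤ d + 4 := by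
    have hU : (Set.univ : Set V) ⊆ ({v} ∪ G.neighborSet v) ∪ distSet G v 2 := by
      intro w _
      have hw := hall w
      rcases (by omega : G.dist v w = 0 ∨ G.dist v w = 1 ∨ G.dist v w = 2) with h | h | h
      · left; left; exact (hconn.dist_eq_zero_iff.mp h).symm
      · left; right; exact SimpleGraph.dist_eq_one_iff_adj.mp h
      · right; exact h
    have h1 := Set.ncard_le_ncard hU (Set.toFinite _)
    have h2 := Set.ncard_union_le ({v} ∪ G.neighborSet v) (distSet G v 2)
    have h3 := Set.ncard_union_le {v} (G.neighborSet v)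
    have h4 := hreg v
    rw [Set.ncard_univ, Nat.card_eq_fintype_card] at h1
    rw [Set.ncard_singleton] at h3
    unfold deg2 at hv
    omega
  refine ⟨hcard, fun hd => ?_⟩
  ext x y
  rw [SimpleGraph.top_adj]
  constructor
  · exact fun h => h.ne
  · intro hxy
    refine ⟨(hconn.pos_dist_of_ne hxy), ?_⟩
    by_contra hlt
    have hdisj : Disjoint (G.neighborSet x) (G.neighborSet y) := by
      rw [Set.disjoint_left]
      intro z hz hz'
      have h1 : G.dist x z = 1 := SimpleGraph.dist_eq_one_iff_adj.mpr hz
      have h2 : G.dist z y = 1 := SimpleGraph.dist_eq_one_iff_adj.mpr (SimpleGraph.Adj.symm hz')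
      have h3 := hconn.dist_triangle (u := x) (v := z) (w := y)
      omega
    have h1 := Set.ncard_union_eq hdisj (Set.toFinite _) (Set.toFinite _)
    have h2 := Set.ncard_le_ncard (Set.subset_univ (G.neighborSet x ∪ G.neighborSet y)) (Set.toFinite _)
    rw [Set.ncard_univ, Nat.card_eq_fintype_card] at h2
    have h3 := hreg x
    have h4 := hreg y
    omega
end

section
/- Let d > 6, let G be a connected d-regular graph such that G² is not complete, and let R be a region of G containing a vertex v with deg₂(v) ≤ 3. Then (1) R contains at least d + 1 vertices, and (2) R ⊆ {v} ∪ N(v) ∪ N₂(v). -/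
open SimpleGraph

variable {V : Type*}

/-- One step of the equivalence relation generating regions : both vertices are low degree
(`deg₂ ≤ 3`) and they are within distance 2 of each other. -/
def regStep (G : SimpleGraph V) (a b : V) : Prop :=
  deg2 G a ≤ 3 ∧ deg2 G b ≤ 3 ∧ G.Reachable a b ∧ G.dist a b ≤ 2

/-- A region : an equivalence class of low-degree vertices under chains of `regStep`,
together with all neighbors of vertices of the class. -/
def IsRegion (G : SimpleGraph V) (R : Set V) : Prop :=
  ∃ x₀, deg2 G x₀ ≤ 3 ∧
    R = {y | Relation.ReflTransGen (regStep G) x₀ y} ∪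
        {y | ∃ x, Relation.ReflTransGen (regStep G) x₀ x ∧ G.Adj x y}


lemma card_N1 {V : Type*} [Fintype V] (G : SimpleGraph V) (d : ℕ)
    (hconn : G.Connected) (hreg : IsRegularGraph G d) (v : V) :
    {t | G.dist v t ≤ 1}.ncard = d + 1 := by
  have h : {t | G.dist v t ≤ 1} = insert v (G.neighborSet v) := by
    ext t
    simp only [Set.mem_ofPred_eq, Set.mem_insert_iff, mem_neighborSet]
    constructor
    · intro h
      rcases Nat.le_one_iff_eq_zero_or_eq_one.mp h with h | h
      · left; exact ((hconn.dist_eq_zero_iff).mp h).symm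
      · right; exact SimpleGraph.dist_eq_one_iff_adj.mp h
    · rintro (h | h)
      · subst h; simp
      · exact (SimpleGraph.dist_eq_one_iff_adj.mpr h).le
  rw [h, Set.ncard_insert_of_notMem (by simp) (Set.toFinite _), hreg v]

lemma exists_mid {V : Type*} (G : SimpleGraph V) (hconn : G.Connected) (x y : V)
    (h : G.dist x y ≤ 2) : ∃ z, G.dist x z ≤ 1 ∧ G.dist z y ≤ 1 := by
  obtain ⟨p, hp⟩ := hconn.exists_walk_length_eq_dist x y
  cases p with
  | nil => exact ⟨x, by simp, by simp⟩
  | @cons _ z _ hadj q =>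
    refine ⟨z, (SimpleGraph.dist_eq_one_iff_adj.mpr hadj).le, ?_⟩
    have := SimpleGraph.dist_le q
    simp at hp
    omega

lemma diff_le {V : Type*} [Fintype V] (G : SimpleGraph V) (d : ℕ)
    (hconn : G.Connected) (hreg : IsRegularGraph G d) (x b : V) (hx : deg2 G x ≤ 3)
    (hb : G.dist x b ≤ 1) (S : Set V) (hS : ∀ t ∈ S, G.dist x t ≤ 2 ∧ 2 ≤ G.dist b t) :
    S.ncard ≤ 3 := by
  have h1 := card_N1 G d hconn hreg x
  have h2 := card_N1 G d hconn hreg b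
  have h3 : (S ∪ {t | G.dist b t ≤ 1}).ncard = S.ncard + (d + 1) := by
    rw [Set.ncard_union_eq ?_ (Set.toFinite _) (Set.toFinite _), h2]
    rw [Set.disjoint_left]
    intro t ht ht'
    have := (hS t ht).2
    simp at ht'
    omega
  have h4 : (S ∪ {t | G.dist b t ≤ 1}) ⊆ {t | G.dist x t ≤ 1} ∪ distSet G x 2 := by
    intro t ht
    have : G.dist x t ≤ 2 := by
      rcases ht with ht | ht
      · exact (hS t ht).1
      · have := hconn.dist_triangle (u := x) (v := b) (w := t)
        simp at ht
        omega
    simp only [distSet, Set.mem_union, Set.mem_ofPred_eq]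
    omega
  have h5 := Set.ncard_le_ncard h4 (Set.toFinite _)
  have h6 := Set.ncard_union_le {t | G.dist x t ≤ 1} (distSet G x 2)
  unfold deg2 at hx
  omega

lemma claim1 {V : Type*} [Fintype V] (G : SimpleGraph V) (d : ℕ) (hd : 6 < d)
    (hconn : G.Connected) (hreg : IsRegularGraph G d) (v u t : V) (hv : deg2 G v ≤ 3)
    (hu : deg2 G u ≤ 3) (hvu : G.dist v u ≤ 2) (hut : G.dist u t ≤ 1) : G.dist v t ≤ 2 := by
  by_contra hc
  obtain ⟨w, hvw, hwu⟩ := exists_mid G hconn v u hvu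
  have tri := fun a b c => hconn.dist_triangle (u := a) (v := b) (w := c)
  have hcm := fun a b => SimpleGraph.dist_comm (G := G) (u := a) (v := b)
  have h1 := card_N1 G d hconn hreg t
  have h2 := diff_le G d hconn hreg u w hu (by rw [hcm]; exact hwu)
    {s | G.dist t s ≤ 1 ∧ 2 ≤ G.dist w s} (by
      rintro s ⟨hs, hs'⟩
      have := tri u t s
      omega)
  have h3 : {s | G.dist t s ≤ 1} ⊆ {s | G.dist t s ≤ 1 ∧ 2 ≤ G.dist w s} ∪ distSet G v 2 := by
    intro s hs
    simp only [distSet, Set.mem_union, Set.mem_ofPred_eq] at hs ⊢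
    have := tri v w s
    have := tri v s t
    have := hcm s t
    omega
  have h5 := Set.ncard_le_ncard h3 (Set.toFinite _)
  have h6 := Set.ncard_union_le {s | G.dist t s ≤ 1 ∧ 2 ≤ G.dist w s} (distSet G v 2)
  unfold deg2 at hv
  omega

lemma claim2 {V : Type*} [Fintype V] (G : SimpleGraph V) (d : ℕ) (hd : 6 < d)
    (hconn : G.Connected) (hreg : IsRegularGraph G d) (v x y : V) (hv : deg2 G v ≤ 3)
    (hx : deg2 G x ≤ 3) (hy : deg2 G y ≤ 3) (hvx : G.dist v x ≤ 2) (hxy : G.dist x y ≤ 2) :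
    G.dist v y ≤ 2 := by
  by_contra hc
  obtain ⟨z, hxz, hzy⟩ := exists_mid G hconn x y hxy
  have tri := fun a b c => hconn.dist_triangle (u := a) (v := b) (w := c)
  have hcm := fun a b => SimpleGraph.dist_comm (G := G) (u := a) (v := b)
  have c1 := fun t ht => claim1 G d hd hconn hreg v x t hv hx hvx ht
  have hvz := c1 z hxz
  have hvy := tri v z y
  have hN := card_N1 G d hconn hreg z
  have hyz := hcm z y
  by_cases h : G.dist v x ≤ 1
  · have hA := diff_le G d hconn hreg y y hy (by simp)
      {s | G.dist z s ≤ 1 ∧ G.dist v s ≤ 1} (by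
        rintro s ⟨hs, hs'⟩
        have := tri y z s
        have := tri v s y
        have := hcm s y
        omega)
    have hS := diff_le G d hconn hreg x v hx (by rw [hcm]; exact h)
      {s | G.dist z s ≤ 1 ∧ 2 ≤ G.dist v s} (by
        rintro s ⟨hs, hs'⟩
        have := tri x z s
        omega)
    have h3 : {s | G.dist z s ≤ 1} ⊆ {s | G.dist z s ≤ 1 ∧ G.dist v s ≤ 1} ∪
        {s | G.dist z s ≤ 1 ∧ 2 ≤ G.dist v s} := by
      intro s hs
      simp only [Set.mem_union, Set.mem_ofPred_eq] at hs ⊢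
      omega
    have h5 := Set.ncard_le_ncard h3 (Set.toFinite _)
    have h6 := Set.ncard_union_le {s | G.dist z s ≤ 1 ∧ G.dist v s ≤ 1}
      {s | G.dist z s ≤ 1 ∧ 2 ≤ G.dist v s}
    omega
  · have hxy2 : 2 ≤ G.dist x y := by
      by_contra hlt
      have := c1 y (by omega)
      omega
    have hA := diff_le G d hconn hreg y y hy (by simp)
      (insert x {s | G.dist z s ≤ 1 ∧ G.dist v s ≤ 1}) (by
        rintro s (rfl | ⟨hs, hs'⟩)
        · rw [hcm]; omega
        · have := tri y z s
          have := tri v s y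
          have := hcm s y
          omega)
    rw [Set.ncard_insert_of_notMem (by intro hh; exact h hh.2) (Set.toFinite _)] at hA
    have hC := diff_le G d hconn hreg x x hx (by simp)
      (insert v {s | G.dist z s ≤ 1 ∧ 3 ≤ G.dist v s}) (by
        rintro s (rfl | ⟨hs, hs'⟩)
        · rw [hcm]; omega
        · have := tri x z s
          have := c1 s
          omega)
    rw [Set.ncard_insert_of_notMem (by intro hh; have := hh.2; simp at this)
      (Set.toFinite _)] at hC
    have h3 : {s | G.dist z s ≤ 1} ⊆ ({s | G.dist z s ≤ 1 ∧ G.dist v s ≤ 1} ∪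
        {s | G.dist z s ≤ 1 ∧ 3 ≤ G.dist v s}) ∪ distSet G v 2 := by
      intro s hs
      simp only [distSet, Set.mem_union, Set.mem_ofPred_eq] at hs ⊢
      omega
    have h5 := Set.ncard_le_ncard h3 (Set.toFinite _)
    have h6 := Set.ncard_union_le ({s | G.dist z s ≤ 1 ∧ G.dist v s ≤ 1} ∪
        {s | G.dist z s ≤ 1 ∧ 3 ≤ G.dist v s}) (distSet G v 2)
    have h7 := Set.ncard_union_le {s | G.dist z s ≤ 1 ∧ G.dist v s ≤ 1}
        {s | G.dist z s ≤ 1 ∧ 3 ≤ G.dist v s}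
    unfold deg2 at hv
    omega

theorem stmt3 {V : Type*} [Fintype V] (G : SimpleGraph V) (d : ℕ) (hd : 6 < d)
    (hconn : G.Connected) (hreg : IsRegularGraph G d) (hnotcomplete : graphSquare G ≠ ⊤)
    (R : Set V) (hR : IsRegion G R) (v : V) (hvR : v ∈ R) (hv : deg2 G v ≤ 3) :
    d + 1 ≤ R.ncard ∧ R ⊆ {v} ∪ G.neighborSet v ∪ distSet G v 2 := by
  obtain ⟨x₀, hx₀, rfl⟩ := hR
  have low : ∀ y, Relation.ReflTransGen (regStep G) x₀ y → deg2 G y ≤ 3 := by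
    intro y h
    induction h with
    | refl => exact hx₀
    | tail _ h _ => exact h.2.1
  have hvc : Relation.ReflTransGen (regStep G) x₀ v := by
    rcases hvR with h | ⟨x, hx, hadj⟩
    · exact h
    · exact hx.tail ⟨low x hx, hv, hconn x v, by
        rw [SimpleGraph.dist_eq_one_iff_adj.mpr hadj]; omega⟩
  have sym : Std.Symm (regStep G) := ⟨by
    rintro a b ⟨h1, h2, h3, h4⟩
    exact ⟨h2, h1, h3.symm, by rwa [SimpleGraph.dist_comm]⟩⟩
  have hvx : Relation.ReflTransGen (regStep G) v x₀ := by
    exact (Relation.ReflTransGen.stdSymm (r := regStep G)).symm _ _ hvc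
  have key : ∀ y, Relation.ReflTransGen (regStep G) v y → G.dist v y ≤ 2 := by
    intro y h
    induction h with
    | refl => simp
    | tail _ h ih => exact claim2 G d hd hconn hreg _ _ _ hv h.1 h.2.1 ih h.2.2.2
  constructor
  · rw [← card_N1 G d hconn hreg v]
    apply Set.ncard_le_ncard _ (Set.toFinite _)
    intro t ht
    rcases Nat.le_one_iff_eq_zero_or_eq_one.mp ht with h | h
    · left
      rw [← (hconn.dist_eq_zero_iff).mp h]
      exact hvc
    · right
      exact ⟨v, hvc, SimpleGraph.dist_eq_one_iff_adj.mp h⟩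
  · intro t ht
    have h2 : G.dist v t ≤ 2 := by
      rcases ht with h | ⟨x, hx, hadj⟩
      · exact key t (hvx.trans h)
      · exact claim1 G d hd hconn hreg v x t hv (low x hx) (key x (hvx.trans hx))
          (SimpleGraph.dist_eq_one_iff_adj.mpr hadj).le
    rcases Nat.lt_or_ge (G.dist v t) 2 with h | h
    · left
      rcases Nat.le_one_iff_eq_zero_or_eq_one.mp (Nat.le_of_lt_succ h) with h | h
      · left; exact ((hconn.dist_eq_zero_iff).mp h).symm
      · right; exact SimpleGraph.dist_eq_one_iff_adj.mp h
    · right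
      exact le_antisymm h2 h
end

section
/- Let d > 6 and let G be a connected d-regular graph such that G² is not complete. If R and R' are distinct regions of G, then R and R' are disjoint. -/
open SimpleGraph

variable {V : Type*}

theorem rs_symm {V : Type*} (G : SimpleGraph V) {a b : V}
    (h : Relation.ReflTransGen (regStep G) a b) : Relation.ReflTransGen (regStep G) b a := by
  induction h with
  | refl => exact .refl
  | tail _ h ih =>
    refine Relation.ReflTransGen.head ?_ ih
    exact ⟨h.2.1, h.1, h.2.2.1.symm, by rw [SimpleGraph.dist_comm]; exact h.2.2.2⟩

theorem rs_low {V : Type*} (G : SimpleGraph V) {a b : V} (ha : deg2 G a ≤ 3)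
    (h : Relation.ReflTransGen (regStep G) a b) : deg2 G b ≤ 3 := by
  induction h with
  | refl => exact ha
  | tail _ h _ => exact h.2.1

theorem rs_near {V : Type*} (G : SimpleGraph V) {a y : V}
    (h : y ∈ {y | Relation.ReflTransGen (regStep G) a y} ∪
        {y | ∃ x, Relation.ReflTransGen (regStep G) a x ∧ G.Adj x y}) :
    ∃ x, Relation.ReflTransGen (regStep G) a x ∧ G.dist x y ≤ 1 := by
  rcases h with h | ⟨x, h, hx⟩
  · exact ⟨y, h, by simp⟩
  · exact ⟨x, h, (SimpleGraph.dist_eq_one_iff_adj.2 hx).le⟩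

/-- Let `d > 6` and `G` connected `d`-regular with `G²` not complete.
Distinct regions of `G` are disjoint. -/
theorem stmt5 {V : Type*} [Fintype V] (G : SimpleGraph V) (d : ℕ) (hd : 6 < d)
    (hconn : G.Connected) (hreg : IsRegularGraph G d) (hnotcomplete : graphSquare G ≠ ⊤)
    (R R' : Set V) (hR : IsRegion G R) (hR' : IsRegion G R') (hne : R ≠ R') :
    Disjoint R R' := by
  obtain ⟨a, ha, rfl⟩ := hR
  obtain ⟨b, hb, rfl⟩ := hR'
  rw [Set.disjoint_left]
  intro y h1 h2
  apply hne
  obtain ⟨u, hu, du⟩ := rs_near G h1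
  obtain ⟨v, hv, dv⟩ := rs_near G h2
  have huv : regStep G u v := by
    refine ⟨rs_low G ha hu, rs_low G hb hv, hconn u v, ?_⟩
    have := hconn.dist_triangle (u := u) (v := y) (w := v)
    rw [SimpleGraph.dist_comm (u := y)] at this
    omega
  have hab : Relation.ReflTransGen (regStep G) a b := (hu.tail huv).trans (rs_symm G hv)
  have key : ∀ x, Relation.ReflTransGen (regStep G) a x ↔ Relation.ReflTransGen (regStep G) b x :=
    fun x => ⟨fun h => (rs_symm G hab).trans h, fun h => hab.trans h⟩
  simp only [key]
end
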